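/- Let μ ∈ ℝ, σ' > 0, ε > 0, and let X be a real random variable with law gaussianReal μ σ'², with cumulative distribution function F and density φ. Define the punish-reward estimator r̂(x, t) = (t + x)/2 if |x − t| ≤ ε, and r̂(x, t) = t − |t − x| if |x − t| > ε. Then the derivative at x = μ + ε of the map x ↦ E[r̂(x, X)], namely 1 + (ε/2)·(φ(μ + 2ε) − 3·φ(μ)) − (1/2)·(F(μ + 2ε) + 3/2), is strictly negative. Hence the optimal self-report of an image-seeking user does not exceed μ + ε: together with the positivity of the derivative at x = μ, any stationary maximizer of E[r̂(·, X)] lies strictly between μ and μ + ε. -/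

import Mathlib

open MeasureTheory ProbabilityTheory
open scoped NNReal ENNReal

/-!
The estimator is `x` plus two truncated linear terms in `t`:
`r̂(x, t) = x + (3/2)(t - x) 1{t < x - ε} + (1/2)(t - x) 1{t ≤ x + ε}`.
If `t` has law `ν` with density `f` and distribution function `F`, the truncated mean of `t - x`
over `t ≤ x + c` has derivative `c f(x + c) - F(x + c)` in `x`, the first term coming from the
moving endpoint. At `x = μ + ε` the two endpoints are `μ` and `μ + 2ε`. When `μ` is the median, the
`F`-terms sum to at most `-3/4 - 1/4`, which cancels the `1` coming from `x`, and the density terms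
sum to `(ε/2)(f(μ + 2ε) - 3 f(μ))`, which is negative as soon as `f(μ + 2ε) < 3 f(μ)`; the Gaussian
density satisfies this because `μ` is its mode.
-/

section TruncatedMean

variable {E : Type*} [NormedAddCommGroup E] [NormedSpace ℝ E]

theorem hasDerivAt_setIntegral_Iic [CompleteSpace E] {h : ℝ → E} {s : ℝ} (hint : Integrable h)
    (hs : ContinuousAt h s) : HasDerivAt (fun u ↦ ∫ t in Set.Iic u, h t) (h s) s := by
  have split (u : ℝ) :
      ∫ t in Set.Iic u, h t = (∫ t in Set.Iic s, h t) + ∫ t in s..u, h t := by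
    rw [← intervalIntegral.integral_Iic_sub_Iic hint.integrableOn hint.integrableOn,
      add_sub_cancel]
  rw [funext split]
  exact (intervalIntegral.integral_hasDerivAt_right hint.intervalIntegrable
    hint.aestronglyMeasurable.stronglyMeasurableAtFilter hs).const_add _

variable {ν : Measure ℝ} {f : ℝ → ℝ}

theorem hasDerivAt_setIntegral_Iic_of_density [CompleteSpace E] {g : ℝ → E} {s : ℝ}
    (hfm : AEMeasurable f) (hf0 : 0 ≤ f)
    (hν : ν = volume.withDensity fun t ↦ ENNReal.ofReal (f t))
    (hg : Integrable g ν) (hfs : ContinuousAt f s) (hgs : ContinuousAt g s) :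
    HasDerivAt (fun u ↦ ∫ t in Set.Iic u, g t ∂ν) (f s • g s) s := by
  subst hν
  have toReal_density (t : ℝ) : (ENNReal.ofReal (f t)).toReal = f t :=
    ENNReal.toReal_ofReal (hf0 t)
  have integrable_smul : Integrable fun t ↦ f t • g t := by
    simpa only [toReal_density] using (integrable_withDensity_iff_integrable_smul₀'
      hfm.ennreal_ofReal (ae_of_all _ fun _ ↦ ENNReal.ofReal_lt_top)).1 hg
  have setIntegral_eq (u : ℝ) :
      ∫ t in Set.Iic u, g t ∂(volume.withDensity fun t ↦ ENNReal.ofReal (f t)) =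
        ∫ t in Set.Iic u, f t • g t := by
    simpa only [toReal_density] using setIntegral_withDensity_eq_setIntegral_toReal_smul₀
      hfm.ennreal_ofReal.restrict (ae_of_all _ fun _ ↦ ENNReal.ofReal_lt_top) g measurableSet_Iic
  simp_rw [setIntegral_eq]
  exact hasDerivAt_setIntegral_Iic integrable_smul (hfs.smul hgs)

theorem hasDerivAt_measureReal_Iic_of_density [IsFiniteMeasure ν] {s : ℝ}
    (hfm : AEMeasurable f) (hf0 : 0 ≤ f)
    (hν : ν = volume.withDensity fun t ↦ ENNReal.ofReal (f t))
    (hfs : ContinuousAt f s) : HasDerivAt (fun u ↦ ν.real (Set.Iic u)) (f s) s := by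
  simpa using hasDerivAt_setIntegral_Iic_of_density hfm hf0 hν (integrable_const (1 : ℝ)) hfs
    continuousAt_const

theorem hasDerivAt_setIntegral_Iic_add_sub_of_density [IsFiniteMeasure ν] {c x : ℝ}
    (hfm : AEMeasurable f) (hf0 : 0 ≤ f)
    (hν : ν = volume.withDensity fun t ↦ ENNReal.ofReal (f t))
    (hid : Integrable id ν) (hf : ContinuousAt f (x + c)) :
    HasDerivAt (fun y ↦ ∫ t in Set.Iic (y + c), (t - y) ∂ν)
      (c * f (x + c) - ν.real (Set.Iic (x + c))) x := by
  have setIntegral_sub (y : ℝ) : ∫ t in Set.Iic (y + c), (t - y) ∂ν =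
      (∫ t in Set.Iic (y + c), id t ∂ν) - y * ν.real (Set.Iic (y + c)) :=
    (integral_sub hid.integrableOn (integrable_const y)).trans
      (by rw [setIntegral_const, smul_eq_mul, mul_comm])
  simp_rw [setIntegral_sub]
  have deriv_mean :=
    (hasDerivAt_setIntegral_Iic_of_density hfm hf0 hν hid hf continuousAt_id).comp_add_const x c
  have deriv_mass := (hasDerivAt_measureReal_Iic_of_density hfm hf0 hν hf).comp_add_const x c
  refine (deriv_mean.sub ((hasDerivAt_id x).mul deriv_mass)).congr_deriv ?_
  simp only [id_eq, smul_eq_mul]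
  ring

end TruncatedMean

section PunishReward

/-- The punish-reward estimator `r̂(x, t)` with tolerance `ε`: the reputation assigned to a user
who self-reports `x` when the aggregate cross-report is `t`. -/
noncomputable def punishReward (ε x t : ℝ) : ℝ :=
  if |x - t| ≤ ε then (t + x) / 2 else t - |t - x|

variable {ν : Measure ℝ} {ε x : ℝ}

theorem measurable_punishReward : Measurable (punishReward ε x) :=
  Measurable.ite (measurableSet_le (by fun_prop) measurable_const) (by fun_prop) (by fun_prop)

theorem punishReward_eq_add_indicator (hε : 0 ≤ ε) (t : ℝ) :
    punishReward ε x t = x + (Set.Iio (x - ε)).indicator (fun t ↦ 3 / 2 * (t - x)) t +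
      (Set.Iic (x + ε)).indicator (fun t ↦ 1 / 2 * (t - x)) t := by
  simp only [punishReward, Set.indicator_apply, Set.mem_Iio, Set.mem_Iic]
  grind

theorem integral_punishReward [IsProbabilityMeasure ν] (hε : 0 ≤ ε) (hid : Integrable id ν) :
    ∫ t, punishReward ε x t ∂ν = x + 3 / 2 * ∫ t in Set.Iio (x - ε), (t - x) ∂ν +
      1 / 2 * ∫ t in Set.Iic (x + ε), (t - x) ∂ν := by
  have integrable_linear (a : ℝ) : Integrable (fun t ↦ a * (t - x)) ν :=
    (hid.sub (integrable_const x)).const_mul a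
  have integrable_lower := (integrable_linear (3 / 2)).indicator (measurableSet_Iio (a := x - ε))
  have integrable_upper := (integrable_linear (1 / 2)).indicator (measurableSet_Iic (a := x + ε))
  have integrable_const_add_lower : Integrable
      (fun t ↦ x + (Set.Iio (x - ε)).indicator (fun t ↦ 3 / 2 * (t - x)) t) ν :=
    (integrable_const x).add integrable_lower
  simp_rw [punishReward_eq_add_indicator hε]
  rw [integral_add integrable_const_add_lower integrable_upper,
    integral_add (integrable_const x) integrable_lower, integral_indicator measurableSet_Iio,
    integral_indicator measurableSet_Iic, integral_const_mul, integral_const_mul, integral_const,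
    probReal_univ, one_smul]

theorem hasDerivAt_integral_punishReward [IsProbabilityMeasure ν] {f : ℝ → ℝ} (hε : 0 ≤ ε)
    (hid : Integrable id ν) (hfm : AEMeasurable f) (hf0 : 0 ≤ f)
    (hν : ν = volume.withDensity fun t ↦ ENNReal.ofReal (f t))
    (hf_lower : ContinuousAt f (x - ε)) (hf_upper : ContinuousAt f (x + ε)) :
    HasDerivAt (fun y ↦ ∫ t, punishReward ε y t ∂ν)
      (1 + ε / 2 * (f (x + ε) - 3 * f (x - ε)) -
        1 / 2 * (cdf ν (x + ε) + 3 * cdf ν (x - ε))) x := by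
  have absCont : ν ≪ volume := hν ▸ withDensity_absolutelyContinuous _ _
  have setIntegral_Iio (y : ℝ) : ∫ t in Set.Iio (y - ε), (t - y) ∂ν =
      ∫ t in Set.Iic (y + -ε), (t - y) ∂ν := by
    rw [← sub_eq_add_neg]
    exact setIntegral_congr_set (absCont.ae_eq Iio_ae_eq_Iic)
  simp_rw [integral_punishReward hε hid, setIntegral_Iio]
  have deriv_lower := hasDerivAt_setIntegral_Iic_add_sub_of_density (c := -ε) hfm hf0 hν hid
    (by rwa [← sub_eq_add_neg])
  have deriv_upper := hasDerivAt_setIntegral_Iic_add_sub_of_density hfm hf0 hν hid hf_upper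
  refine (((hasDerivAt_id x).add (deriv_lower.const_mul (3 / 2))).add
    (deriv_upper.const_mul (1 / 2))).congr_deriv ?_
  rw [cdf_eq_real, cdf_eq_real, ← sub_eq_add_neg]
  ring

end PunishReward

section Gaussian

theorem cdf_eq_half_of_map_const_sub_eq_self {ν : Measure ℝ} [IsProbabilityMeasure ν]
    [NullSingletonClass ν] {m : ℝ} (hsymm : ν.map (2 * m - ·) = ν) : cdf ν m = 1 / 2 := by
  have reflect : ν.real (Set.Iic m) = ν.real (Set.Ioi m) := calc
    ν.real (Set.Iic m) = (ν.map (2 * m - ·)).real (Set.Iic m) := by rw [hsymm]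
    _ = ν.real (Set.Ici m) := by
      rw [map_measureReal_apply (by fun_prop) measurableSet_Iic, Set.preimage_const_sub_Iic,
        two_mul, add_sub_cancel_right]
    _ = ν.real (Set.Ioi m) := measureReal_congr Ioi_ae_eq_Ici.symm
  have compl := probReal_compl_eq_one_sub (μ := ν) (measurableSet_Iic (a := m))
  rw [Set.compl_Iic] at compl
  rw [cdf_eq_real]
  linarith

variable (μ : ℝ) {v : ℝ≥0}

theorem cdf_gaussianReal_mean (hv : v ≠ 0) : cdf (gaussianReal μ v) μ = 1 / 2 := by
  have := nullSingletonClass_gaussianReal (μ := μ) hv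
  refine cdf_eq_half_of_map_const_sub_eq_self ?_
  rw [gaussianReal_map_const_sub, two_mul, add_sub_cancel_right]

theorem continuous_gaussianPDFReal (v : ℝ≥0) : Continuous (gaussianPDFReal μ v) := by
  rw [gaussianPDFReal_def]
  fun_prop

theorem gaussianPDFReal_le_gaussianPDFReal_mean (v : ℝ≥0) (t : ℝ) :
    gaussianPDFReal μ v t ≤ gaussianPDFReal μ v μ := by
  have exponent_le : -(t - μ) ^ 2 / (2 * v) ≤ -(μ - μ) ^ 2 / (2 * v) := by
    rw [sub_self]
    gcongr ?_ / _
    linarith [sq_nonneg (t - μ)]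
  exact mul_le_mul_of_nonneg_left (Real.exp_le_exp.2 exponent_le) (by positivity)

end Gaussian

theorem stmt13_general {Ω : Type*} [MeasurableSpace Ω] {P : Measure Ω} {X : Ω → ℝ}
    {ν : Measure ℝ} [IsProbabilityMeasure ν] (hX : HasLaw X ν P) (hid : Integrable id ν)
    {f : ℝ → ℝ} (hfm : AEMeasurable f) (hf0 : 0 ≤ f)
    (hν : ν = volume.withDensity fun t ↦ ENNReal.ofReal (f t)) {μ ε : ℝ} (hε : 0 < ε)
    (hmed : cdf ν μ = 1 / 2) (hfμ : ContinuousAt f μ) (hfμε : ContinuousAt f (μ + 2 * ε))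
    (hlt : f (μ + 2 * ε) < 3 * f μ) :
    HasDerivAt (fun y ↦ ∫ ω, punishReward ε y (X ω) ∂P)
        (1 + ε / 2 * (f (μ + 2 * ε) - 3 * f μ) - 1 / 2 * (cdf ν (μ + 2 * ε) + 3 / 2)) (μ + ε) ∧
      1 + ε / 2 * (f (μ + 2 * ε) - 3 * f μ) - 1 / 2 * (cdf ν (μ + 2 * ε) + 3 / 2) < 0 := by
  have lower : μ + ε - ε = μ := add_sub_cancel_right μ ε
  have upper : μ + ε + ε = μ + 2 * ε := by ring
  constructor
  · have integral_eq (y : ℝ) : ∫ ω, punishReward ε y (X ω) ∂P = ∫ t, punishReward ε y t ∂ν :=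
      hX.integral_comp measurable_punishReward.aestronglyMeasurable
    simp_rw [integral_eq]
    refine (hasDerivAt_integral_punishReward hε.le hid hfm hf0 hν (by rwa [lower])
      (by rwa [upper])).congr_deriv ?_
    rw [lower, upper, hmed]
    ring
  · have density_term : ε / 2 * (f (μ + 2 * ε) - 3 * f μ) < 0 :=
      mul_neg_of_pos_of_neg (half_pos hε) (sub_neg.2 hlt)
    have cdf_ge : 1 / 2 ≤ cdf ν (μ + 2 * ε) :=
      hmed ▸ monotone_cdf ν (by linarith : μ ≤ μ + 2 * ε)
    linarith

/-- The derivative at `x = μ + ε` of the expected reputation `x ↦ E[r̂(x, X)]` in the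
punish-reward mechanism, namely
`1 + (ε/2)(φ(μ+2ε) − 3φ(μ)) − (1/2)(F(μ+2ε) + 3/2)`, is strictly negative; hence the
optimal self-report of an image-seeking user does not exceed `μ + ε`. -/
theorem stmt13 {Ω : Type*} [MeasurableSpace Ω] (P : Measure Ω) [IsProbabilityMeasure P]
    (μ : ℝ) (σ' : ℝ≥0) (hσ' : 0 < σ') (ε : ℝ) (hε : 0 < ε)
    (X : Ω → ℝ) (hXm : Measurable X) (hX : P.map X = gaussianReal μ (σ' ^ 2))
    (F : ℝ → ℝ) (hF : ∀ t, F t = cdf (gaussianReal μ (σ' ^ 2)) t)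
    (φ : ℝ → ℝ) (hφ : ∀ t, φ t = gaussianPDFReal μ (σ' ^ 2) t)
    (rhat : ℝ → ℝ → ℝ)
    (hrhat : ∀ x t, rhat x t = if |x - t| ≤ ε then (t + x) / 2 else t - |t - x|) :
    HasDerivAt (fun y => ∫ ω, rhat y (X ω) ∂P)
        (1 + ε / 2 * (φ (μ + 2 * ε) - 3 * φ μ)
          - 1 / 2 * (F (μ + 2 * ε) + 3 / 2)) (μ + ε) ∧
      1 + ε / 2 * (φ (μ + 2 * ε) - 3 * φ μ)
          - 1 / 2 * (F (μ + 2 * ε) + 3 / 2) < 0 := by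
  have hv : σ' ^ 2 ≠ 0 := pow_ne_zero 2 hσ'.ne'
  obtain rfl : F = cdf (gaussianReal μ (σ' ^ 2)) := funext hF
  obtain rfl : φ = gaussianPDFReal μ (σ' ^ 2) := funext hφ
  obtain rfl : rhat = punishReward ε := funext₂ hrhat
  have pdf_pos := gaussianPDFReal_pos μ (σ' ^ 2) μ hv
  have pdf_le := gaussianPDFReal_le_gaussianPDFReal_mean μ (σ' ^ 2) (μ + 2 * ε)
  exact stmt13_general ⟨hXm.aemeasurable, hX⟩ ((memLp_id_gaussianReal 1).integrable le_rfl)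
    (measurable_gaussianPDFReal μ _).aemeasurable (gaussianPDFReal_nonneg μ _)
    (gaussianReal_of_var_ne_zero μ hv) hε (cdf_gaussianReal_mean μ hv)
    (continuous_gaussianPDFReal μ _).continuousAt (continuous_gaussianPDFReal μ _).continuousAt
    (by linarith)
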